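/- arXiv:2510.25400 — 3 statements merged into one kernel-verified Lean document; each statement's English description precedes it below -/
import Mathlib

section
/- Let d ≥ 2 and λ_1, …, λ_d ≥ 0 be real numbers, and let Ñ_1, …, Ñ_d be independent random variables with Ñ_j ~ Poisson(λ_j/2). For λ ≥ 1 define R̃_λ = Σ_{j=1}^d (2λ_j²/λ) · 1{Ñ_j ≤ λ_j/4}. Then: (i) for any δ ∈ (0, e^{-2}), the probability that R̃_1 ≥ 33550 d + 33550 log²(1/δ) is at most δ; and (ii) for any δ ∈ (0, e^{-√d}], taking λ = log(1/δ)/√d, the probability that R̃_λ ≥ 91190 √d log(1/δ) is at most δ. -/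
open MeasureTheory ProbabilityTheory Finset
open scoped ENNReal

/-! Since `R̃_λ = (2 / λ) ∑ λ_j² 1{Ñ_j ≤ λ_j / 4}`, everything reduces to the upper tail of
`S = ∑ w_j² 1_{A_j}` for independent events with `P(A_j) ≤ exp (-2 w_j)`; for the Poisson events
`A_j = {Ñ_j ≤ λ_j / 4}` Chernoff's bound allows `w_j = λ_j / 40`. The exponential moments of
`w_j² 1_{A_j}` are too large for a direct Chernoff argument, so `S` is first replaced by
`√(d + S) - √d`. As a function of `S` this is subadditive, so it is at most a sum of independent
variables `φ_j 1_{A_j}` with `φ_j ≤ w_j` and `φ_j ≤ w_j² / (2 √d)`. The first bound keeps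
`exp φ_j` well below `exp (2 w_j)`, and the second then makes the excess
`P(A_j) (exp φ_j - 1)` at most `1 / √d`, so the moment generating function of the sum at `1` is
at most `exp √d`. Markov's inequality gives `P((2 √d + L)² ≤ S) ≤ exp (-L)`. -/

open Real (exp exp_le_exp exp_nonneg log)
open scoped NNReal Nat

section ShiftedSqrt

/-- The square root recentred at `R ^ 2`. It compresses a sum of squares like the
square root does, but near `0` it grows only linearly, with slope `1 / (2 * R)`. -/
noncomputable def shiftedSqrt (R s : ℝ) : ℝ := √(R ^ 2 + s) - R

variable {R s t x : ℝ}

lemma shiftedSqrt_zero (hR : 0 ≤ R) : shiftedSqrt R 0 = 0 := by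
  simp [shiftedSqrt, Real.sqrt_sq hR]

lemma shiftedSqrt_nonneg (hs : 0 ≤ s) : 0 ≤ shiftedSqrt R s :=
  sub_nonneg.2 (Real.le_sqrt_of_sq_le (by linarith))

lemma sqrt_sub_le_shiftedSqrt : √s - R ≤ shiftedSqrt R s :=
  sub_le_sub_right (Real.sqrt_le_sqrt (by linarith [sq_nonneg R])) R

lemma shiftedSqrt_sq_le (hR : 0 ≤ R) (hx : 0 ≤ x) : shiftedSqrt R (x ^ 2) ≤ x := by
  have h : √(R ^ 2 + x ^ 2) ≤ x + R :=
    (Real.sqrt_le_left (by positivity)).2 (by nlinarith [mul_nonneg hR hx])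
  exact sub_le_iff_le_add.2 h

lemma two_mul_mul_shiftedSqrt_le (hs : 0 ≤ s) : 2 * R * shiftedSqrt R s ≤ s := by
  have hsq : √(R ^ 2 + s) ^ 2 = R ^ 2 + s := Real.sq_sqrt (by positivity)
  unfold shiftedSqrt
  nlinarith [sq_nonneg (√(R ^ 2 + s) - R)]

lemma shiftedSqrt_add_le (hs : 0 ≤ s) (ht : 0 ≤ t) :
    shiftedSqrt R (s + t) ≤ shiftedSqrt R s + shiftedSqrt R t := by
  have hst : R * √(R ^ 2 + (s + t)) ≤ √(R ^ 2 + s) * √(R ^ 2 + t) := by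
    rw [← Real.sqrt_mul (by positivity)]
    refine Real.le_sqrt_of_sq_le ?_
    rw [mul_pow, Real.sq_sqrt (by positivity)]
    nlinarith [mul_nonneg hs ht]
  have hsq : (√(R ^ 2 + (s + t)) + R) ^ 2 ≤ (√(R ^ 2 + s) + √(R ^ 2 + t)) ^ 2 := by
    rw [add_sq, add_sq, Real.sq_sqrt (by positivity), Real.sq_sqrt (by positivity),
      Real.sq_sqrt (by positivity)]
    linarith
  have := le_of_sq_le_sq hsq (by positivity)
  unfold shiftedSqrt
  linarith

lemma shiftedSqrt_sum_le {ι : Type*} (I : Finset ι) {f : ι → ℝ} (hR : 0 ≤ R)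
    (hf : ∀ i ∈ I, 0 ≤ f i) : shiftedSqrt R (∑ i ∈ I, f i) ≤ ∑ i ∈ I, shiftedSqrt R (f i) :=
  le_sum_of_subadditive_on_pred (shiftedSqrt R) (0 ≤ ·) (shiftedSqrt_zero hR).le
    (fun _ _ ↦ shiftedSqrt_add_le) (fun _ _ ↦ add_nonneg) f hf

lemma exp_neg_mul_exp_shiftedSqrt_sub_one_le (hR : 0 < R) (hx : 0 ≤ x) :
    exp (-2 * x) * (exp (shiftedSqrt R (x ^ 2)) - 1) ≤ 1 / R := by
  set u := shiftedSqrt R (x ^ 2)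
  have hu_le : u ≤ x := shiftedSqrt_sq_le hR.le hx
  have hu_quad : u ≤ x ^ 2 / 2 / R := by
    rw [le_div_iff₀ hR]
    linarith [two_mul_mul_shiftedSqrt_le (R := R) (sq_nonneg x)]
  have h_secant : exp u - 1 ≤ u * exp u := by
    have h := mul_le_mul_of_nonneg_right (Real.one_sub_le_exp_neg u) (exp_nonneg u)
    rw [← Real.exp_add, neg_add_cancel, Real.exp_zero] at h
    linarith
  have h_sq : x ^ 2 / 2 ≤ exp x := by simpa using Real.pow_div_factorial_le_exp x hx 2
  calc exp (-2 * x) * (exp u - 1)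
      ≤ exp (-2 * x) * (x ^ 2 / 2 / R * exp x) := by grw [h_secant, hu_quad, hu_le]
    _ ≤ exp (-2 * x) * (exp x / R * exp x) := by grw [h_sq]
    _ = exp (-2 * x + x + x) / R := by rw [Real.exp_add, Real.exp_add]; ring
    _ = 1 / R := by ring_nf; simp

end ShiftedSqrt

section IndependentEvents

variable {Ω ι : Type*} [MeasurableSpace Ω] {μ : Measure Ω}

lemma mgf_indicator_const [IsProbabilityMeasure μ] {A : Set Ω} (hA : NullMeasurableSet A μ)
    (c t : ℝ) : mgf (A.indicator fun _ ↦ c) μ t = 1 + μ.real A * (exp (t * c) - 1) := by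
  have h (ω : Ω) : exp (t * A.indicator (fun _ ↦ c) ω) =
      1 + A.indicator (fun _ ↦ exp (t * c) - 1) ω := by
    by_cases hω : ω ∈ A <;> simp [hω]
  simp_rw [mgf, h]
  rw [integral_add (integrable_const 1) ((integrable_const _).indicator₀ hA),
    integral_indicator₀ hA]
  simp

variable {A : ι → Set Ω}

lemma iIndepSet_preimage_of_iIndepFun {β : ι → Type*} [∀ i, MeasurableSpace (β i)]
    {X : ∀ i, Ω → β i} (hX : iIndepFun X μ) {S : ∀ i, Set (β i)}
    (hS : ∀ i, MeasurableSet (S i)) : iIndepSet (fun i ↦ X i ⁻¹' S i) μ := by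
  rw [iIndepSet_iff_iIndep]
  refine iIndep_of_iIndep_of_le ((iIndepFun_iff_iIndep _ _ _).1 hX) fun i ↦ ?_
  exact MeasurableSpace.generateFrom_le (by rintro _ rfl; exact ⟨S i, hS i, rfl⟩)

variable [Fintype ι]

lemma measureReal_le_sum_indicator_const_le (hindep : iIndepSet A μ)
    (hA : ∀ i, NullMeasurableSet (A i) μ) {c : ι → ℝ} {b : ℝ}
    (hb : ∀ i, μ.real (A i) * (exp (c i) - 1) ≤ b) (t : ℝ) :
    μ.real {ω | t ≤ ∑ i, (A i).indicator (fun _ ↦ c i) ω} ≤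
      exp (Fintype.card ι * b - t) := by
  have := hindep.isProbabilityMeasure
  set X : ι → Ω → ℝ := fun i ↦ (A i).indicator fun _ ↦ c i
  have hX_meas (i : ι) : AEMeasurable (X i) μ := aemeasurable_const.indicator₀ (hA i)
  have hX_indep : iIndepFun X μ := by
    convert (hindep.iIndepFun_indicator (β := ℝ)).comp (fun i y ↦ c i * y)
      (fun i ↦ measurable_const_mul (c i)) using 2 with i
    ext ω
    by_cases hω : ω ∈ A i <;> simp [X, hω]
  have h_bdd (ω : Ω) : (∑ i, X i) ω ≤ ∑ i, |c i| := by
    rw [Finset.sum_apply]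
    refine sum_le_sum fun i _ ↦ ?_
    by_cases hω : ω ∈ A i <;> simp [X, hω, le_abs_self]
  have h_int : Integrable (fun ω ↦ exp (1 * (∑ i, X i) ω)) μ :=
    integrable_exp_mul_of_le 1 _ zero_le_one (by fun_prop) (.of_forall h_bdd)
  calc μ.real {ω | t ≤ ∑ i, X i ω}
      = μ.real {ω | t ≤ (∑ i, X i) ω} := by simp only [Finset.sum_apply]
    _ ≤ exp (-1 * t) * ∏ i, mgf (X i) μ 1 := by
        rw [← hX_indep.mgf_sum₀ hX_meas]
        exact measure_ge_le_exp_mul_mgf t zero_le_one h_int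
    _ ≤ exp (-1 * t) * ∏ _i : ι, exp b := by
        gcongr with i
        · exact fun i _ ↦ mgf_nonneg
        · rw [mgf_indicator_const (hA i), one_mul]
          linarith [hb i, Real.add_one_le_exp b]
    _ = exp (Fintype.card ι * b - t) := by
        rw [prod_const, card_univ, ← Real.exp_nat_mul, ← Real.exp_add]
        ring_nf

theorem measureReal_sq_le_sum_indicator_sq_le (hindep : iIndepSet A μ)
    (hA : ∀ i, NullMeasurableSet (A i) μ) {w : ι → ℝ} (hw : ∀ i, 0 ≤ w i)
    (htail : ∀ i, μ.real (A i) ≤ exp (-2 * w i)) (L : ℝ) :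
    μ.real {ω | (2 * √(Fintype.card ι) + L) ^ 2 ≤
      ∑ i, (A i).indicator (fun _ ↦ w i ^ 2) ω} ≤ exp (-L) := by
  have := hindep.isProbabilityMeasure
  set R := √(Fintype.card ι)
  have hR : 0 ≤ R := Real.sqrt_nonneg _
  have h_excess (i : ι) : μ.real (A i) * (exp (shiftedSqrt R (w i ^ 2)) - 1) ≤ 1 / R := by
    have : Nonempty ι := ⟨i⟩
    have hR_pos : 0 < R := Real.sqrt_pos.2 (by exact_mod_cast Fintype.card_pos)
    have h_exp : 1 ≤ exp (shiftedSqrt R (w i ^ 2)) :=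
      Real.one_le_exp (shiftedSqrt_nonneg (sq_nonneg _))
    exact (mul_le_mul_of_nonneg_right (htail i) (sub_nonneg.2 h_exp)).trans
      (exp_neg_mul_exp_shiftedSqrt_sub_one_le hR_pos (hw i))
  have h_sum (ω : Ω) : √(∑ i, (A i).indicator (fun _ ↦ w i ^ 2) ω) - R ≤
      ∑ i, (A i).indicator (fun _ ↦ shiftedSqrt R (w i ^ 2)) ω := by
    refine sqrt_sub_le_shiftedSqrt.trans ((shiftedSqrt_sum_le univ hR fun i _ ↦
      Set.indicator_nonneg (fun _ _ ↦ sq_nonneg _) ω).trans_eq (sum_congr rfl fun i _ ↦ ?_))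
    by_cases hω : ω ∈ A i <;> simp [hω, shiftedSqrt_zero hR]
  calc μ.real {ω | (2 * R + L) ^ 2 ≤ ∑ i, (A i).indicator (fun _ ↦ w i ^ 2) ω}
      ≤ μ.real {ω | R + L ≤ ∑ i, (A i).indicator (fun _ ↦ shiftedSqrt R (w i ^ 2)) ω} :=
        measureReal_mono fun ω hω ↦ by
          rw [Set.mem_ofPred_eq] at hω ⊢
          linarith [h_sum ω, Real.le_sqrt_of_sq_le hω]
    _ ≤ exp (Fintype.card ι * (1 / R) - (R + L)) :=
        measureReal_le_sum_indicator_const_le hindep hA h_excess _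
    _ = exp (-L) := by rw [mul_one_div, Real.div_sqrt, sub_add_cancel_left]

end IndependentEvents

section Poisson

lemma hasSum_exp_mul_poissonMeasure (r : ℝ≥0) (t : ℝ) :
    HasSum (fun n : ℕ ↦ exp (-r) * r ^ n / n ! * exp (t * n)) (exp (r * (exp t - 1))) := by
  have h := (NormedSpace.expSeries_div_hasSum_exp (r * exp t)).mul_left (exp (-r))
  rw [← Real.exp_eq_exp_ℝ, ← Real.exp_add] at h
  convert! h using 1
  · ext n
    rw [mul_pow, ← Real.exp_nat_mul, mul_comm t]
    ring
  · ring_nf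

lemma integrable_exp_mul_poissonMeasure (r : ℝ≥0) (t : ℝ) :
    Integrable (fun n : ℕ ↦ exp (t * n)) (poissonMeasure r) := by
  rw [integrable_poissonMeasure_iff]
  simpa using (hasSum_exp_mul_poissonMeasure r t).summable

lemma mgf_natCast_poissonMeasure (r : ℝ≥0) (t : ℝ) :
    mgf (fun n : ℕ ↦ (n : ℝ)) (poissonMeasure r) t = exp (r * (exp t - 1)) := by
  rw [mgf, integral_poissonMeasure]
  exact (hasSum_exp_mul_poissonMeasure r t).tsum_eq

lemma poissonMeasure_real_le_mul_le (r : ℝ≥0) {c : ℝ} (hc : 0 < c) (hc_one : c ≤ 1) :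
    (poissonMeasure r).real {n : ℕ | (n : ℝ) ≤ c * r} ≤ exp (-(r * (1 - c + c * log c))) := by
  refine (measure_le_le_exp_mul_mgf (c * r) (Real.log_nonpos hc.le hc_one)
    (integrable_exp_mul_poissonMeasure r (log c))).trans_eq ?_
  rw [mgf_natCast_poissonMeasure, Real.exp_log hc, ← Real.exp_add]
  ring_nf

lemma poissonMeasure_real_le_half_mul_le (r : ℝ≥0) :
    (poissonMeasure r).real {n : ℕ | (n : ℝ) ≤ 1 / 2 * r} ≤ exp (-(r / 10)) := by
  refine (poissonMeasure_real_le_mul_le r (by norm_num) (by norm_num)).trans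
    (exp_le_exp.2 (neg_le_neg ?_))
  have h_rate : (1 : ℝ) / 10 ≤ 1 - 1 / 2 + 1 / 2 * log (1 / 2) := by
    rw [one_div 2, Real.log_inv]
    linarith [Real.log_two_lt_d9]
  nlinarith [mul_le_mul_of_nonneg_left h_rate r.coe_nonneg]

variable {Ω : Type*} [MeasurableSpace Ω] {μ : Measure Ω} {N : Ω → ℕ}

lemma measureReal_le_quarter_le_of_hasLaw_poissonMeasure {m : ℝ≥0}
    (hN : HasLaw N (poissonMeasure (m / 2)) μ) :
    μ.real {ω | (N ω : ℝ) ≤ m / 4} ≤ exp (-2 * (m / 40)) := by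
  rw [hN.measureReal_eq (p := fun n ↦ (n : ℝ) ≤ m / 4) .of_discrete]
  convert! poissonMeasure_real_le_half_mul_le (m / 2) using 2
  · ext n
    push_cast
    ring_nf
  · push_cast
    ring

lemma hasLaw_poissonMeasure_of_measure_eq (hN : AEMeasurable N μ) {r : ℝ≥0}
    (h : ∀ k, μ {ω | N ω = k} = ENNReal.ofReal (exp (-r) * r ^ k / k !)) :
    HasLaw N (poissonMeasure r) μ where
  aemeasurable := hN
  map_eq := Measure.ext_of_singleton fun k ↦ by
    rw [Measure.map_apply_of_aemeasurable hN (measurableSet_singleton k), poissonMeasure_singleton]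
    exact h k

end Poisson

section Residual

variable {Ω ι : Type*} [Fintype ι]

/-- The residual `R̃_l` of the Poisson variables `N i` with means `lam i / 2`: the total penalty
`2 * lam i ^ 2 / l` over the coordinates at which `N i` is at most half its mean. -/
noncomputable def poissonResidual (lam : ι → ℝ≥0) (N : ι → Ω → ℕ) (l : ℝ) (ω : Ω) : ℝ :=
  ∑ i, (2 * (lam i : ℝ) ^ 2 / l) * (if (N i ω : ℝ) ≤ lam i / 4 then 1 else 0)

variable {lam : ι → ℝ≥0} {N : ι → Ω → ℕ}

lemma poissonResidual_eq_mul_sum_indicator (l : ℝ) (ω : Ω) :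
    poissonResidual lam N l ω =
      2 * 40 ^ 2 / l * ∑ i, (N i ⁻¹' {n | (n : ℝ) ≤ lam i / 4}).indicator
        (fun _ ↦ (lam i / 40 : ℝ) ^ 2) ω := by
  rw [poissonResidual, mul_sum]
  refine sum_congr rfl fun i _ ↦ ?_
  by_cases h : (N i ω : ℝ) ≤ lam i / 4
  · have hω : ω ∈ N i ⁻¹' {n | (n : ℝ) ≤ lam i / 4} := h
    rw [Set.indicator_of_mem hω, if_pos h]
    ring
  · simp [h]

variable [MeasurableSpace Ω] {μ : Measure Ω}

lemma measure_le_poissonResidual_le (hindep : iIndepFun N μ)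
    (hlaw : ∀ i, HasLaw (N i) (poissonMeasure (lam i / 2)) μ) {l t δ : ℝ} (hl : 0 < l)
    (hδ : 0 < δ) (ht : 2 * 40 ^ 2 * (2 * √(Fintype.card ι) + log (1 / δ)) ^ 2 ≤ l * t) :
    μ {ω | t ≤ poissonResidual lam N l ω} ≤ ENNReal.ofReal δ := by
  have := hindep.isProbabilityMeasure
  set A : ι → Set Ω := fun i ↦ N i ⁻¹' {n | (n : ℝ) ≤ lam i / 4}
  have hA (i : ι) : NullMeasurableSet (A i) μ :=
    (hlaw i).aemeasurable.nullMeasurableSet_preimage .of_discrete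
  have hA_indep : iIndepSet A μ :=
    iIndepSet_preimage_of_iIndepFun hindep fun _ ↦ .of_discrete
  rw [← ofReal_measureReal]
  refine ENNReal.ofReal_le_ofReal ?_
  calc μ.real {ω | t ≤ poissonResidual lam N l ω}
      ≤ μ.real {ω | (2 * √(Fintype.card ι) + log (1 / δ)) ^ 2 ≤
          ∑ i, (A i).indicator (fun _ ↦ (lam i / 40 : ℝ) ^ 2) ω} :=
        measureReal_mono fun ω hω ↦ by
          rw [Set.mem_ofPred_eq, poissonResidual_eq_mul_sum_indicator, div_mul_eq_mul_div,
            le_div_iff₀' hl] at hω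
          rw [Set.mem_ofPred_eq]
          linarith
    _ ≤ exp (-log (1 / δ)) :=
        measureReal_sq_le_sum_indicator_sq_le hA_indep hA (fun i ↦ by positivity)
          (fun i ↦ measureReal_le_quarter_le_of_hasLaw_poissonMeasure (hlaw i)) _
    _ = δ := by rw [one_div, Real.log_inv, neg_neg, Real.exp_log hδ]

theorem tail_residual_poisson_general [Nonempty ι] (hindep : iIndepFun N μ)
    (hlaw : ∀ i, HasLaw (N i) (poissonMeasure (lam i / 2)) μ) :
    (∀ δ : ℝ, 0 < δ →
      μ {ω | 33550 * Fintype.card ι + 33550 * log (1 / δ) ^ 2 ≤ poissonResidual lam N 1 ω} ≤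
        ENNReal.ofReal δ) ∧
    (∀ δ : ℝ, 0 < δ → δ ≤ exp (-√(Fintype.card ι)) →
      μ {ω | 91190 * √(Fintype.card ι) * log (1 / δ) ≤
          poissonResidual lam N (log (1 / δ) / √(Fintype.card ι)) ω} ≤
        ENNReal.ofReal δ) := by
  set D := √(Fintype.card ι)
  have hD_sq : D ^ 2 = Fintype.card ι := Real.sq_sqrt (Nat.cast_nonneg _)
  have hD : 0 < D := Real.sqrt_pos.2 (by exact_mod_cast Fintype.card_pos)
  refine ⟨fun δ hδ ↦ ?_, fun δ hδ hδD ↦ ?_⟩ <;> set L := log (1 / δ)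
  · refine measure_le_poissonResidual_le hindep hlaw one_pos hδ ?_
    nlinarith [hD_sq, sq_nonneg (D - 2 * L), sq_nonneg D, sq_nonneg L]
  · have hDL : D ≤ L := by
      rw [show L = -log δ by simp [L], le_neg]
      exact (Real.log_le_iff_le_exp hδ).2 hδD
    have hL : 0 < L := hD.trans_le hDL
    refine measure_le_poissonResidual_le hindep hlaw (div_pos hL hD) hδ ?_
    calc 2 * 40 ^ 2 * (2 * D + L) ^ 2 ≤ 2 * 40 ^ 2 * (2 * L + L) ^ 2 := by gcongr
      _ ≤ 91190 * L ^ 2 := by nlinarith [sq_nonneg L]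
      _ = L / D * (91190 * D * L) := by field_simp

end Residual

theorem tail_residual_poisson {Ω : Type*} [MeasurableSpace Ω]
    (μ : Measure Ω) [IsProbabilityMeasure μ]
    (d : ℕ) (hd : 2 ≤ d)
    (lamj : Fin d → ℝ) (hlamj : ∀ j, 0 ≤ lamj j)
    (N : Fin d → Ω → ℕ) (hmeas : ∀ j, Measurable (N j))
    (hindep : iIndepFun N μ)
    (hpois : ∀ j k, μ {ω | N j ω = k} =
      ENNReal.ofReal (Real.exp (-(lamj j / 2)) * (lamj j / 2) ^ k / k.factorial)) :
    (∀ δ : ℝ, 0 < δ → δ < Real.exp (-2) →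
      μ {ω | 33550 * d + 33550 * Real.log (1 / δ) ^ 2 ≤
          ∑ j, (2 * lamj j ^ 2 / 1) * (if (N j ω : ℝ) ≤ lamj j / 4 then 1 else 0)} ≤
        ENNReal.ofReal δ) ∧
    (∀ δ : ℝ, 0 < δ → δ ≤ Real.exp (-Real.sqrt d) →
      μ {ω | 91190 * Real.sqrt d * Real.log (1 / δ) ≤
          ∑ j, (2 * lamj j ^ 2 / (Real.log (1 / δ) / Real.sqrt d)) *
            (if (N j ω : ℝ) ≤ lamj j / 4 then 1 else 0)} ≤
        ENNReal.ofReal δ) := by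
  lift lamj to Fin d → ℝ≥0 using hlamj
  have : NeZero d := ⟨by lia⟩
  have hlaw (j : Fin d) : HasLaw (N j) (poissonMeasure (lamj j / 2)) μ :=
    hasLaw_poissonMeasure_of_measure_eq (hmeas j).aemeasurable (by simpa using hpois j)
  obtain ⟨h_unit, h_log⟩ := tail_residual_poisson_general hindep hlaw
  simp only [Fintype.card_fin] at h_unit h_log
  exact ⟨fun δ hδ _ ↦ h_unit δ hδ, h_log⟩
end

section
/- (Latała's moment inequality.) Let Z, Z_1, …, Z_m be i.i.d. nonnegative random variables. Then for any real p ∈ [1, ∞), the L^p norm of the sum satisfies ‖Σ_{i=1}^m Z_i‖_p ≤ 2e² · sup{ (p/s)·(m/p)^{1/s}·‖Z‖_s : max(1, p/m) ≤ s ≤ p }. -/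
open MeasureTheory ProbabilityTheory Finset
open scoped ENNReal

/-- The `L^p` norm `‖Z‖_p = (E[|Z|^p])^{1/p} ∈ [0, +∞]` of a real random variable,
for a real exponent `p`. -/
noncomputable def lpNormR {Ω : Type*} [MeasurableSpace Ω] (μ : Measure Ω) (p : ℝ)
    (Z : Ω → ℝ) : ℝ≥0∞ :=
  (∫⁻ ω, ENNReal.ofReal (|Z ω| ^ p) ∂μ) ^ (1 / p)

/-!
Latała's argument. As `∑ Xᵢ ≤ t ∏ (1 + Xᵢ / t)` for nonnegative `Xᵢ`, independence reduces the bound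
`‖∑ Xᵢ‖_p ≤ e t` to `E (1 + Xᵢ / t)^p ≤ e^r` with `r = p / m`. The supremum being at most `b` says,
for `f = Xᵢ / t` with `t = 2 e b`, that `E f^s ≤ r (s / (2 e p))^s` whenever `max 1 r ≤ s ≤ p`.
Expand `(1 + f)^p ≤ ∑_{k ≤ n} (p f)^k / k! + f^p` with `n = ⌊p⌋`: it suffices that the `k`-th term
has expectation at most `(e^r - 1) / 2^k` for `1 ≤ k ≤ n`, and the remainder at most
`(e^r - 1) / 2^n`. For `k ≥ r` this is the bound on `E f^k`. For `k < r` there is no such bound to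
start from, and Lyapunov's inequality deduces one from the moment of order `r`.
-/

open scoped Nat

section RealInequalities

lemma hasDerivAt_sum_pow_div_factorial (a x : ℝ) (n : ℕ) :
    HasDerivAt (fun u ↦ ∑ k ∈ range (n + 1), (a * u) ^ k / k !)
      (a * ∑ k ∈ range n, (a * x) ^ k / k !) x := by
  simp only [sum_range_succ', mul_sum, pow_zero]
  refine (HasDerivAt.fun_sum fun k _ ↦ ?_).add_const _
  refine (((hasDerivAt_const_mul a).fun_pow (k + 1)).div_const _).congr_deriv ?_
  rw [Nat.factorial_succ, Nat.cast_mul, Nat.add_sub_cancel]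
  field_simp

lemma one_add_rpow_le_sum_pow_div_factorial_add_rpow {n : ℕ} {p x : ℝ} (hnp : n ≤ p)
    (hpn : p ≤ n + 1) (hx : 0 ≤ x) :
    (1 + x) ^ p ≤ ∑ k ∈ range (n + 1), (p * x) ^ k / k ! + x ^ p := by
  induction n generalizing p x with
  | zero =>
    have hp : 0 ≤ p := by simpa using hnp
    have hp' : p ≤ 1 := by simpa using hpn
    simpa using Real.rpow_add_le_add_rpow zero_le_one hx hp hp'
  | succ n ih =>
    push_cast at hnp hpn
    have hp : 1 ≤ p := by linarith [n.cast_nonneg (α := ℝ)]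
    have hderiv_left (u : ℝ) : HasDerivAt (fun u ↦ (1 + u) ^ p) (p * (1 + u) ^ (p - 1)) u := by
      simpa using ((hasDerivAt_id u).const_add 1).rpow_const (p := p) (Or.inr hp)
    have hderiv_right (u : ℝ) :=
      (hasDerivAt_sum_pow_div_factorial p u (n + 1)).add (Real.hasDerivAt_rpow_const (Or.inr hp))
    refine image_le_of_deriv_right_le_deriv_boundary
      (fun u _ ↦ (hderiv_left u).continuousAt.continuousWithinAt)
      (fun u _ ↦ (hderiv_left u).hasDerivWithinAt) ?_
      (fun u _ ↦ (hderiv_right u).continuousAt.continuousWithinAt)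
      (fun u _ ↦ (hderiv_right u).hasDerivWithinAt) (fun u hu ↦ ?_) (Set.right_mem_Icc.2 hx)
    · simp [sum_range_succ', Real.zero_rpow (by linarith : p ≠ 0)]
    · have hu : 0 ≤ u := hu.1
      calc p * (1 + u) ^ (p - 1)
          ≤ p * (∑ k ∈ range (n + 1), ((p - 1) * u) ^ k / k ! + u ^ (p - 1)) := by
            gcongr
            exact ih (by linarith) (by linarith) hu
        _ ≤ p * (∑ k ∈ range (n + 1), (p * u) ^ k / k ! + u ^ (p - 1)) := by
            have : 0 ≤ (p - 1) * u := mul_nonneg (by linarith) hu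
            gcongr
            linarith
        _ = p * ∑ k ∈ range (n + 1), (p * u) ^ k / k ! + p * u ^ (p - 1) := mul_add ..

lemma pow_le_factorial_mul_exp_sub_one {x : ℝ} (hx : 0 ≤ x) {k : ℕ} (hk : k ≠ 0) :
    x ^ k ≤ k ! * (Real.exp x - 1) := by
  have hone : 1 ≤ ∑ i ∈ range k, x ^ i / i ! := by
    simpa using single_le_sum (f := fun i ↦ x ^ i / (i ! : ℝ)) (fun i _ ↦ by positivity)
      (mem_range.2 hk.bot_lt)
  have hexp := Real.sum_le_exp_of_nonneg hx (k + 1)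
  rw [sum_range_succ] at hexp
  rw [← div_le_iff₀' (by positivity)]
  linarith

lemma rpow_div_max_mul_max_pow_le {r : ℝ} (hr : 0 ≤ r) {k : ℕ} (hk : k ≠ 0) :
    r ^ (k / max (k : ℝ) r) * max (k : ℝ) r ^ k ≤ Real.exp 1 ^ k * (k ! * (Real.exp r - 1)) := by
  have hk' : (k : ℝ) ≠ 0 := by exact_mod_cast hk
  have hr_le : r ≤ Real.exp r - 1 := by linarith [Real.add_one_le_exp r]
  rcases le_total r k with hrk | hkr
  · have hpow : (k : ℝ) ^ k ≤ Real.exp 1 ^ k * k ! := by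
      rw [← div_le_iff₀ (by positivity), Real.exp_one_pow]
      exact Real.pow_div_factorial_le_exp k k.cast_nonneg k
    rw [max_eq_left hrk, div_self hk', Real.rpow_one]
    calc r * (k : ℝ) ^ k ≤ (Real.exp r - 1) * (Real.exp 1 ^ k * k !) := by gcongr; linarith
      _ = Real.exp 1 ^ k * (k ! * (Real.exp r - 1)) := by ring
  · have hr0 : r ≠ 0 := by
      have : (0 : ℝ) < k := by positivity
      linarith
    rw [max_eq_right hkr]
    gcongr
    · calc r ^ (k / r) ≤ Real.exp r ^ (k / r) := by gcongr; linarith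
        _ = Real.exp 1 ^ k := by
          rw [← Real.exp_mul, mul_div_cancel₀ _ hr0, Real.exp_one_pow]
    · exact pow_le_factorial_mul_exp_sub_one hr hk

lemma sum_div_two_pow_succ_add_div_two_pow (c : ℝ) (n : ℕ) :
    ∑ k ∈ range n, c / 2 ^ (k + 1) + c / 2 ^ n = c := by
  induction n with
  | zero => simp
  | succ n ih =>
    rw [sum_range_succ, add_assoc]
    convert ih using 2
    rw [pow_succ]
    ring

lemma div_two_mul_exp_one_mul_rpow_le {p : ℝ} (hp : 0 < p) {n : ℕ} (hnp : n ≤ p) :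
    (p / (2 * Real.exp 1 * p)) ^ p ≤ (1 / 2) ^ n := by
  have hexp : 1 ≤ Real.exp 1 := Real.one_le_exp zero_le_one
  calc (p / (2 * Real.exp 1 * p)) ^ p = (1 / (2 * Real.exp 1)) ^ p := by field_simp
    _ ≤ (1 / 2) ^ p := by
        gcongr
        linarith
    _ ≤ (1 / 2) ^ (n : ℝ) :=
        Real.rpow_le_rpow_of_exponent_ge (by norm_num) (by norm_num) hnp
    _ = (1 / 2) ^ n := Real.rpow_natCast _ _

end RealInequalities

lemma one_add_sum_le_prod_one_add {ι R : Type*} [CommSemiring R] [PartialOrder R]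
    [IsOrderedRing R] (s : Finset ι) {f : ι → R} (hf : ∀ i ∈ s, 0 ≤ f i) :
    1 + ∑ i ∈ s, f i ≤ ∏ i ∈ s, (1 + f i) := by
  induction s using Finset.cons_induction with
  | empty => simp
  | cons i s hi ih =>
    rw [forall_mem_cons] at hf
    have hsum : 0 ≤ ∑ j ∈ s, f j := sum_nonneg hf.2
    have hfi : 0 ≤ f i := hf.1
    rw [sum_cons, prod_cons]
    calc 1 + (f i + ∑ j ∈ s, f j) ≤ 1 + (f i + ∑ j ∈ s, f j) + f i * ∑ j ∈ s, f j :=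
          le_add_of_nonneg_right (mul_nonneg hfi hsum)
      _ = (1 + f i) * (1 + ∑ j ∈ s, f j) := by ring
      _ ≤ (1 + f i) * ∏ j ∈ s, (1 + f j) := by
          have : 0 ≤ 1 + f i := add_nonneg zero_le_one hfi
          gcongr
          exact ih hf.2

lemma ennreal_one_add_rpow_le_sum_add_rpow {n : ℕ} {p : ℝ} (hp : 0 < p) (hnp : n ≤ p)
    (hpn : p ≤ n + 1) (x : ℝ≥0∞) :
    (1 + x) ^ p ≤
      1 + ∑ k ∈ range n, ENNReal.ofReal (p ^ (k + 1) / (k + 1)!) * x ^ (k + 1) + x ^ p := by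
  induction x with
  | top => simp [ENNReal.top_rpow_of_pos hp]
  | coe x =>
    have h := one_add_rpow_le_sum_pow_div_factorial_add_rpow hnp hpn x.coe_nonneg
    simp_rw [sum_range_succ', mul_pow, pow_zero, Nat.factorial_zero, Nat.cast_one, mul_one, div_one,
      mul_div_right_comm] at h
    rw [← ENNReal.ofReal_coe_nnreal, ← ENNReal.ofReal_one,
      ← ENNReal.ofReal_add zero_le_one x.coe_nonneg,
      ENNReal.ofReal_rpow_of_nonneg (by positivity) hp.le,
      ENNReal.ofReal_rpow_of_nonneg x.coe_nonneg hp.le]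
    refine (ENNReal.ofReal_le_ofReal h).trans_eq ?_
    rw [ENNReal.ofReal_add (by positivity) (by positivity),
      ENNReal.ofReal_add (by positivity) zero_le_one,
      ENNReal.ofReal_sum_of_nonneg fun k _ ↦ by positivity, add_comm (ENNReal.ofReal 1)]
    simp_rw [ENNReal.ofReal_mul (show 0 ≤ p ^ (_ + 1) / ((_ + 1)! : ℝ) by positivity),
      ENNReal.ofReal_pow x.coe_nonneg]

lemma div_rpow_le_of_ofReal_mul_le {N : ℝ≥0∞} {m p s b : ℝ} (hm : 0 < m) (hp : 0 < p) (hs : 0 < s)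
    (hb : 0 < b) (h : ENNReal.ofReal (p / s * (m / p) ^ (1 / s)) * N ≤ ENNReal.ofReal b) :
    (N / ENNReal.ofReal (2 * Real.exp 1 * b)) ^ s ≤
      ENNReal.ofReal (p / m * (s / (2 * Real.exp 1 * p)) ^ s) := by
  set A := p / s * (m / p) ^ (1 / s) with hA
  have hA0 : 0 < A := by positivity
  have hApow : A ^ s = (p / s) ^ s * (m / p) := by
    rw [hA, Real.mul_rpow (by positivity) (by positivity), ← Real.rpow_mul (by positivity),
      one_div_mul_cancel hs.ne', Real.rpow_one]
  have hN : N ≤ ENNReal.ofReal (b / A) := by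
    rwa [ENNReal.ofReal_div_of_pos hA0, ENNReal.le_div_iff_mul_le (by simp [hA0]) (by simp),
      mul_comm]
  calc (N / ENNReal.ofReal (2 * Real.exp 1 * b)) ^ s
      ≤ (ENNReal.ofReal (b / A) / ENNReal.ofReal (2 * Real.exp 1 * b)) ^ s := by gcongr
    _ = ENNReal.ofReal ((1 / (2 * Real.exp 1)) ^ s / A ^ s) := by
        rw [← ENNReal.ofReal_div_of_pos (by positivity),
          ENNReal.ofReal_rpow_of_nonneg (by positivity) hs.le,
          ← Real.div_rpow (by positivity) hA0.le]
        field_simp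
    _ = ENNReal.ofReal (p / m * (s / (2 * Real.exp 1 * p)) ^ s) := by
        rw [hApow, mul_comm, ← div_div, ← Real.div_rpow (by positivity) (by positivity)]
        field_simp

section Moments

variable {Ω : Type*} [MeasurableSpace Ω] {μ : Measure Ω}

lemma eLpNorm'_div_rpow_eq_lintegral {E : Type*} [ENorm E] {X : Ω → E} {t : ℝ≥0∞} (ht : t ≠ 0)
    {s : ℝ} (hs : 0 < s) :
    (eLpNorm' X s μ / t) ^ s = ∫⁻ ω, (‖X ω‖ₑ / t) ^ s ∂μ := by
  have ht' : (t ^ s)⁻¹ ≠ ⊤ := by simp [ENNReal.rpow_eq_zero_iff, ht, hs, hs.not_gt]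
  simp_rw [ENNReal.div_rpow_of_nonneg _ _ hs.le, div_eq_mul_inv]
  rw [lintegral_mul_const' _ _ ht', lintegral_rpow_enorm_eq_rpow_eLpNorm' hs]

variable [IsProbabilityMeasure μ] {f : Ω → ℝ≥0∞}

lemma lintegral_rpow_le_rpow_lintegral_of_le (hf : AEMeasurable f μ) {s t : ℝ} (hs : 0 < s)
    (hst : s ≤ t) :
    ∫⁻ ω, f ω ^ s ∂μ ≤ (∫⁻ ω, f ω ^ t ∂μ) ^ (s / t) := by
  have h := eLpNorm'_le_eLpNorm'_of_exponent_le hs hst μ hf.aestronglyMeasurable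
  simp_rw [eLpNorm', enorm_eq_self, one_div, ENNReal.rpow_inv_le_iff hs, ← ENNReal.rpow_mul] at h
  rwa [div_eq_inv_mul]

lemma lintegral_pow_le_factorial_mul_exp_sub_one (hf : AEMeasurable f μ) {a r : ℝ} (ha : 0 ≤ a)
    (hr : 0 ≤ r) {k : ℕ} (hk : k ≠ 0)
    (h : ∫⁻ ω, f ω ^ max (k : ℝ) r ∂μ ≤
      ENNReal.ofReal (r * (a * max (k : ℝ) r) ^ max (k : ℝ) r)) :
    ∫⁻ ω, f ω ^ k ∂μ ≤ ENNReal.ofReal ((Real.exp 1 * a) ^ k * (k ! * (Real.exp r - 1))) := by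
  have hk' : (0 : ℝ) < k := by positivity
  have hreal := rpow_div_max_mul_max_pow_le hr hk
  set s := max (k : ℝ) r
  have hks : k ≤ s := le_max_left _ _
  have hs : 0 < s := hk'.trans_le hks
  calc ∫⁻ ω, f ω ^ k ∂μ = ∫⁻ ω, f ω ^ (k : ℝ) ∂μ := by simp_rw [ENNReal.rpow_natCast]
    _ ≤ (∫⁻ ω, f ω ^ s ∂μ) ^ (k / s) := lintegral_rpow_le_rpow_lintegral_of_le hf hk' hks
    _ ≤ ENNReal.ofReal (r * (a * s) ^ s) ^ (k / s) := by gcongr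
    _ = ENNReal.ofReal (a ^ k * (r ^ (k / s) * s ^ k)) := by
        rw [ENNReal.ofReal_rpow_of_nonneg (by positivity) (by positivity),
          Real.mul_rpow hr (by positivity), ← Real.rpow_mul (by positivity),
          mul_div_cancel₀ _ hs.ne', Real.rpow_natCast, mul_pow]
        ring_nf
    _ ≤ ENNReal.ofReal (a ^ k * (Real.exp 1 ^ k * (k ! * (Real.exp r - 1)))) := by gcongr
    _ = ENNReal.ofReal ((Real.exp 1 * a) ^ k * (k ! * (Real.exp r - 1))) := by
        rw [mul_pow]
        ring_nf

lemma ofReal_mul_lintegral_pow_le_exp_sub_one_div_two_pow (hf : AEMeasurable f μ) {p r : ℝ}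
    (hp : 0 < p) (hr : 0 ≤ r) {k : ℕ} (hk : k ≠ 0)
    (h : ∫⁻ ω, f ω ^ max (k : ℝ) r ∂μ ≤
      ENNReal.ofReal (r * (max (k : ℝ) r / (2 * Real.exp 1 * p)) ^ max (k : ℝ) r)) :
    ENNReal.ofReal (p ^ k / k !) * ∫⁻ ω, f ω ^ k ∂μ ≤
      ENNReal.ofReal ((Real.exp r - 1) / 2 ^ k) := by
  have hmoment := lintegral_pow_le_factorial_mul_exp_sub_one (a := (2 * Real.exp 1 * p)⁻¹)
    hf (by positivity) hr hk (by simpa only [inv_mul_eq_div] using h)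
  have hcancel : Real.exp 1 * (2 * Real.exp 1 * p)⁻¹ = (2 * p)⁻¹ := by field_simp
  calc ENNReal.ofReal (p ^ k / k !) * ∫⁻ ω, f ω ^ k ∂μ
      ≤ ENNReal.ofReal (p ^ k / k !) * ENNReal.ofReal
          ((Real.exp 1 * (2 * Real.exp 1 * p)⁻¹) ^ k * (k ! * (Real.exp r - 1))) := by
        gcongr
    _ = ENNReal.ofReal ((Real.exp r - 1) / 2 ^ k) := by
        rw [← ENNReal.ofReal_mul (by positivity), hcancel, inv_pow, mul_pow]
        field_simp

lemma lintegral_one_add_rpow_le_exp (hf : AEMeasurable f μ) {p r : ℝ} (hp : 1 ≤ p) (hr : 0 ≤ r)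
    (hrp : r ≤ p)
    (h : ∀ s ∈ Set.Icc (max 1 r) p,
      ∫⁻ ω, f ω ^ s ∂μ ≤ ENNReal.ofReal (r * (s / (2 * Real.exp 1 * p)) ^ s)) :
    ∫⁻ ω, (1 + f ω) ^ p ∂μ ≤ ENNReal.ofReal (Real.exp r) := by
  have hp0 : 0 < p := by linarith
  have hc : 0 ≤ Real.exp r - 1 := by linarith [Real.add_one_le_exp r]
  set n := ⌊p⌋₊
  have hnp : n ≤ p := Nat.floor_le hp0.le
  have hlast : ∫⁻ ω, f ω ^ p ∂μ ≤ ENNReal.ofReal ((Real.exp r - 1) / 2 ^ n) := by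
    refine (h p ⟨max_le hp hrp, le_rfl⟩).trans (ENNReal.ofReal_le_ofReal ?_)
    calc r * (p / (2 * Real.exp 1 * p)) ^ p ≤ (Real.exp r - 1) * (1 / 2) ^ n := by
          gcongr
          · linarith [Real.add_one_le_exp r]
          · exact div_two_mul_exp_one_mul_rpow_le hp0 hnp
      _ = (Real.exp r - 1) / 2 ^ n := by rw [one_div_pow, mul_one_div]
  calc ∫⁻ ω, (1 + f ω) ^ p ∂μ
      ≤ ∫⁻ ω, (1 + ∑ k ∈ range n, ENNReal.ofReal (p ^ (k + 1) / (k + 1)!) * f ω ^ (k + 1)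
          + f ω ^ p) ∂μ :=
        lintegral_mono fun ω ↦
          ennreal_one_add_rpow_le_sum_add_rpow hp0 hnp (Nat.lt_floor_add_one p).le (f ω)
    _ = 1 + ∑ k ∈ range n, ENNReal.ofReal (p ^ (k + 1) / (k + 1)!) * ∫⁻ ω, f ω ^ (k + 1) ∂μ
          + ∫⁻ ω, f ω ^ p ∂μ := by
        rw [lintegral_add_left' (by fun_prop), lintegral_add_left' (by fun_prop),
          lintegral_finsetSum' _ fun k _ ↦ by fun_prop]
        simp_rw [lintegral_const_mul' _ _ ENNReal.ofReal_ne_top, lintegral_one, measure_univ]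
    _ ≤ 1 + ∑ k ∈ range n, ENNReal.ofReal ((Real.exp r - 1) / 2 ^ (k + 1))
          + ENNReal.ofReal ((Real.exp r - 1) / 2 ^ n) := by
        gcongr with k hk
        have hkp : ((k + 1 : ℕ) : ℝ) ≤ p := (Nat.cast_le.2 (mem_range.1 hk)).trans hnp
        exact ofReal_mul_lintegral_pow_le_exp_sub_one_div_two_pow hf hp0 hr k.succ_ne_zero
          (h _ ⟨max_le_max (by simp) le_rfl, max_le hkp hrp⟩)
    _ = ENNReal.ofReal (Real.exp r) := by
        rw [← ENNReal.ofReal_sum_of_nonneg fun k _ ↦ by positivity, add_assoc,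
          ← ENNReal.ofReal_add (sum_nonneg fun k _ ↦ by positivity) (by positivity),
          sum_div_two_pow_succ_add_div_two_pow, ← ENNReal.ofReal_one,
          ← ENNReal.ofReal_add zero_le_one hc, add_sub_cancel]

end Moments

section IndependentSums

variable {ι Ω : Type*} [Fintype ι] [MeasurableSpace Ω] {μ : Measure Ω}

lemma lintegral_prod_eq_prod_lintegral_of_iIndepFun {f : ι → Ω → ℝ≥0∞} (hindep : iIndepFun f μ)
    (hf : ∀ i, AEMeasurable (f i) μ) :
    ∫⁻ ω, ∏ i, f i ω ∂μ = ∏ i, ∫⁻ ω, f i ω ∂μ := by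
  have hprod : ∀ᵐ ω ∂μ, ∏ i, f i ω = ∏ i, (hf i).mk (f i) ω := by
    filter_upwards [ae_all_iff.2 fun i ↦ (hf i).ae_eq_mk] with ω hω
    simp_rw [hω]
  rw [lintegral_congr_ae hprod, lintegral_prod_eq_prod_lintegral_of_indepFun univ _
    (hindep.congr fun i ↦ (hf i).ae_eq_mk) fun i ↦ (hf i).measurable_mk]
  exact prod_congr rfl fun i _ ↦ (lintegral_congr_ae (hf i).ae_eq_mk).symm

lemma lintegral_sum_rpow_le_mul_prod {f : ι → Ω → ℝ≥0∞} (hindep : iIndepFun f μ)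
    (hf : ∀ i, AEMeasurable (f i) μ) {p : ℝ} (hp : 0 ≤ p) {t : ℝ≥0∞} (ht0 : t ≠ 0) (ht : t ≠ ⊤) :
    ∫⁻ ω, (∑ i, f i ω) ^ p ∂μ ≤ t ^ p * ∏ i, ∫⁻ ω, (1 + f i ω / t) ^ p ∂μ := by
  have hsum (ω : Ω) : ∑ i, f i ω ≤ t * ∏ i, (1 + f i ω / t) :=
    calc ∑ i, f i ω = t * ∑ i, f i ω / t := by
          simp_rw [mul_sum, ENNReal.mul_div_cancel ht0 ht]
      _ ≤ t * ∏ i, (1 + f i ω / t) := by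
          gcongr
          exact le_add_self.trans (one_add_sum_le_prod_one_add univ fun _ _ ↦ zero_le)
  calc ∫⁻ ω, (∑ i, f i ω) ^ p ∂μ ≤ ∫⁻ ω, t ^ p * ∏ i, (1 + f i ω / t) ^ p ∂μ := by
        refine lintegral_mono fun ω ↦ ?_
        rw [ENNReal.prod_rpow_of_nonneg hp, ← ENNReal.mul_rpow_of_nonneg _ _ hp]
        gcongr
        exact hsum ω
    _ = t ^ p * ∏ i, ∫⁻ ω, (1 + f i ω / t) ^ p ∂μ := by
        rw [lintegral_const_mul' _ _ (ENNReal.rpow_ne_top_of_nonneg hp ht)]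
        congr 1
        exact lintegral_prod_eq_prod_lintegral_of_iIndepFun
          (hindep.comp (fun _ x ↦ (1 + x / t) ^ p) fun _ ↦ by fun_prop)
          fun i ↦ (((hf i).div_const t).const_add 1).pow_const p

variable {E : Type*} [TopologicalSpace E] [ESeminormedAddCommMonoid E] [MeasurableSpace E]
  [OpensMeasurableSpace E] [Nonempty ι] {X : ι → Ω → E} {p : ℝ}

theorem eLpNorm'_sum_le_of_forall_eLpNorm'_le (hX : ∀ i, AEMeasurable (X i) μ)
    (hindep : iIndepFun X μ) (hp : 1 ≤ p) {b : ℝ} (hb : 0 < b)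
    (h : ∀ s ∈ Set.Icc (max 1 (p / Fintype.card ι)) p, ∀ i,
      ENNReal.ofReal (p / s * (Fintype.card ι / p) ^ (1 / s)) * eLpNorm' (X i) s μ ≤
        ENNReal.ofReal b) :
    eLpNorm' (fun ω ↦ ∑ i, X i ω) p μ ≤ ENNReal.ofReal (2 * Real.exp 2 * b) := by
  have := hindep.isProbabilityMeasure
  have hp0 : 0 < p := by linarith
  set m : ℝ := (Fintype.card ι : ℝ)
  have hm : 1 ≤ m := Nat.one_le_cast.2 Fintype.card_pos
  set t := ENNReal.ofReal (2 * Real.exp 1 * b)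
  have ht : t ≠ 0 := (ENNReal.ofReal_pos.2 (by positivity)).ne'
  have hone (i : ι) : ∫⁻ ω, (1 + ‖X i ω‖ₑ / t) ^ p ∂μ ≤ ENNReal.ofReal (Real.exp (p / m)) := by
    refine lintegral_one_add_rpow_le_exp (by fun_prop) hp (by positivity)
      (div_le_self hp0.le hm) fun s hs ↦ ?_
    have hs0 : 0 < s := by linarith [le_max_left 1 (p / m), hs.1]
    rw [← eLpNorm'_div_rpow_eq_lintegral ht hs0]
    exact div_rpow_le_of_ofReal_mul_le (by positivity) hp0 hs0 hb (h s hs i)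
  rw [eLpNorm', one_div, ENNReal.rpow_inv_le_iff hp0]
  calc ∫⁻ ω, ‖∑ i, X i ω‖ₑ ^ p ∂μ ≤ ∫⁻ ω, (∑ i, ‖X i ω‖ₑ) ^ p ∂μ := by
        gcongr
        exact enorm_sum_le _ _
    _ ≤ t ^ p * ∏ i, ∫⁻ ω, (1 + ‖X i ω‖ₑ / t) ^ p ∂μ :=
        lintegral_sum_rpow_le_mul_prod (hindep.comp (fun _ ↦ enorm) fun _ ↦ measurable_enorm)
          (fun i ↦ (hX i).enorm) hp0.le ht ENNReal.ofReal_ne_top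
    _ ≤ t ^ p * ∏ _i : ι, ENNReal.ofReal (Real.exp (p / m)) := by
        gcongr with i
        exact hone i
    _ = t ^ p * ENNReal.ofReal (Real.exp 1) ^ p := by
        rw [prod_const, card_univ, ← ENNReal.ofReal_pow (Real.exp_pos _).le, ← Real.exp_nat_mul,
          mul_div_cancel₀ _ (by positivity), ENNReal.ofReal_rpow_of_pos (Real.exp_pos 1),
          Real.exp_one_rpow]
    _ = ENNReal.ofReal (2 * Real.exp 2 * b) ^ p := by
        rw [← ENNReal.mul_rpow_of_nonneg _ _ hp0.le, ← ENNReal.ofReal_mul (by positivity),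
          ← one_add_one_eq_two, Real.exp_add]
        ring_nf

theorem latala_moment_inequality_general (hX : ∀ i, AEMeasurable (X i) μ) (hindep : iIndepFun X μ)
    (hp : 1 ≤ p) :
    eLpNorm' (fun ω ↦ ∑ i, X i ω) p μ ≤
      ENNReal.ofReal (2 * Real.exp 2) *
        ⨆ s ∈ Set.Icc (max 1 (p / Fintype.card ι)) p,
          ENNReal.ofReal (p / s * (Fintype.card ι / p) ^ (1 / s)) * ⨆ i, eLpNorm' (X i) s μ := by
  have hC : ENNReal.ofReal (2 * Real.exp 2) ≠ 0 := (ENNReal.ofReal_pos.2 (by positivity)).ne'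
  rw [mul_comm, ← ENNReal.div_le_iff hC ENNReal.ofReal_ne_top]
  refine le_of_forall_gt_imp_ge_of_dense fun c hc ↦ ?_
  rcases eq_or_ne c ⊤ with rfl | hc_top
  · exact le_top
  obtain ⟨b, rfl⟩ : ∃ b : ℝ, c = ENNReal.ofReal b := ⟨_, (ENNReal.ofReal_toReal hc_top).symm⟩
  have hb : 0 < b := ENNReal.ofReal_pos.1 (bot_le.trans_lt hc)
  rw [ENNReal.div_le_iff hC ENNReal.ofReal_ne_top, mul_comm, ← ENNReal.ofReal_mul (by positivity)]
  refine eLpNorm'_sum_le_of_forall_eLpNorm'_le hX hindep hp hb fun s hs i ↦ ?_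
  exact (mul_le_mul_right (le_iSup (fun i ↦ eLpNorm' (X i) s μ) i) _).trans
    ((le_iSup₂_of_le s hs le_rfl).trans hc.le)

end IndependentSums

lemma lpNormR_eq_eLpNorm' {Ω : Type*} [MeasurableSpace Ω] (μ : Measure Ω) {p : ℝ} (hp : 0 ≤ p)
    (Z : Ω → ℝ) : lpNormR μ p Z = eLpNorm' Z p μ := by
  simp_rw [lpNormR, eLpNorm', Real.enorm_eq_ofReal_abs,
    ENNReal.ofReal_rpow_of_nonneg (abs_nonneg _) hp]

lemma eLpNorm'_eq_of_identDistrib {Ω Ω' E : Type*} [MeasurableSpace Ω] [MeasurableSpace Ω']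
    [TopologicalSpace E] [ContinuousENorm E] [MeasurableSpace E] [OpensMeasurableSpace E]
    {μ : Measure Ω} {ν : Measure Ω'} {X : Ω → E} {Y : Ω' → E} (h : IdentDistrib X Y μ ν) (p : ℝ) :
    eLpNorm' X p μ = eLpNorm' Y p ν :=
  congrArg (· ^ (1 / p)) (h.comp (measurable_enorm.pow_const p)).lintegral_eq

/-- Latała's moment inequality for sums of i.i.d. nonnegative random variables. -/
theorem latala_moment_inequality {Ω : Type*} [MeasurableSpace Ω]
    (μ : Measure Ω) [IsProbabilityMeasure μ]
    (m : ℕ) (hm : 1 ≤ m)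
    (Z : Ω → ℝ) (Zi : Fin m → Ω → ℝ)
    (hZmeas : Measurable Z) (hZimeas : ∀ i, Measurable (Zi i))
    (hZnn : ∀ ω, 0 ≤ Z ω) (hZinn : ∀ i ω, 0 ≤ Zi i ω)
    (hindep : iIndepFun Zi μ)
    (hident : ∀ i, IdentDistrib (Zi i) Z μ μ)
    (p : ℝ) (hp : 1 ≤ p) :
    lpNormR μ p (fun ω => ∑ i, Zi i ω) ≤
      ENNReal.ofReal (2 * Real.exp 2) *
        ⨆ s ∈ Set.Icc (max 1 (p / m)) p,
          ENNReal.ofReal (p / s * ((m : ℝ) / p) ^ (1 / s)) * lpNormR μ s Z := by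
  have : Nonempty (Fin m) := ⟨⟨0, hm⟩⟩
  have h := latala_moment_inequality_general (fun i ↦ (hZimeas i).aemeasurable) hindep hp
  simp_rw [eLpNorm'_eq_of_identDistrib (hident _), ciSup_const, Fintype.card_fin] at h
  rw [lpNormR_eq_eLpNorm' μ (by linarith)]
  refine h.trans_eq ?_
  congr! 5 with s hs
  exact (lpNormR_eq_eLpNorm' μ (by linarith [le_max_left 1 (p / m), hs.1]) Z).symm
end

section
/- Let n ≥ 1, d ≥ 1, let P = (p_1, …, p_d) ∈ Δ_d, and let P̂_n be the Laplace estimator p̂_j = (N_j + 1)/(n + d) built from an i.i.d. sample X_1, …, X_n from P. Then the expected χ²-divergence satisfies the exact identity E[χ²(P, P̂_n)] = (d − 1)/(n + 1) − ((n + d)/(n + 1)) · Σ_{j=1}^d p_j (1 − p_j)^{n+1}, and consequently E[χ²(P, P̂_n)] ≤ (d − 1)/(n + 1) ≤ d/n. -/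
open Finset

/-- Count of class `j` in the sample `x`. -/
def count {n d : ℕ} (x : Fin n → Fin d) (j : Fin d) : ℕ :=
  (Finset.univ.filter (fun i => x i = j)).card

/-- χ²-divergence between two vectors (all coordinates of `q` positive). -/
noncomputable def chiSq {d : ℕ} (p q : Fin d → ℝ) : ℝ :=
  ∑ j, (p j - q j) ^ 2 / q j

/-- Expectation of a real functional of the i.i.d. sample of size `n` from `p`. -/
noncomputable def sampleExp {n d : ℕ} (p : Fin d → ℝ) (f : (Fin n → Fin d) → ℝ) : ℝ :=
  ∑ x : Fin n → Fin d, (∏ i, p (x i)) * f x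

/-!
Expanding the square gives `χ²(P, Q) = ∑ p_j² / q_j - 1` for probability vectors, so for the Laplace
estimator everything reduces to `E[1 / (N_j + 1)]`. Write `1 / (N_j + 1) = ∫₀¹ t ^ N_j dt` and swap
the integral with the expectation: the probability generating function
`E[t ^ N_j] = (1 - p_j + p_j t) ^ n` integrates to `(1 - (1 - p_j) ^ (n + 1)) / ((n + 1) p_j)`.
-/

section Counts

variable {n d : ℕ}

lemma sum_count (x : Fin n → Fin d) : ∑ j, count x j = n := by
  simpa [count] using (card_eq_sum_card_fiberwise (f := x) (s := univ) (t := univ) (by simp)).symm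

lemma pow_count {M : Type*} [CommMonoid M] (t : M) (x : Fin n → Fin d) (j : Fin d) :
    t ^ count x j = ∏ i, if x i = j then t else 1 := by
  simp [count, prod_ite]

/-- The Laplace (add-one) estimator `P̂_n` of a distribution on `Fin d` from the sample `x`. -/
noncomputable def laplaceEstimator (x : Fin n → Fin d) (j : Fin d) : ℝ :=
  ((count x j : ℝ) + 1) / ((n : ℝ) + d)

lemma laplaceEstimator_pos (x : Fin n → Fin d) (j : Fin d) : 0 < laplaceEstimator x j := by
  have hd : (0 : ℝ) < d := Nat.cast_pos.mpr j.pos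
  unfold laplaceEstimator
  positivity

lemma sum_laplaceEstimator (hd : d ≠ 0) (x : Fin n → Fin d) : ∑ j, laplaceEstimator x j = 1 := by
  have hcount : ∑ j, (count x j : ℝ) = n := mod_cast sum_count x
  have hnd : (n : ℝ) + d ≠ 0 := by positivity
  simp [laplaceEstimator, ← sum_div, sum_add_distrib, hcount, hnd]

end Counts

section ChiSq

variable {n d : ℕ} {p : Fin d → ℝ}

lemma chiSq_eq_sum_sq_div {q : Fin d → ℝ} (hq : ∀ j, q j ≠ 0) :
    chiSq p q = ∑ j, p j ^ 2 / q j - 2 * ∑ j, p j + ∑ j, q j := by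
  rw [chiSq, mul_sum, ← sum_sub_distrib, ← sum_add_distrib]
  refine sum_congr rfl fun j _ => ?_
  have := hq j
  field_simp
  ring

lemma chiSq_laplaceEstimator (hp1 : ∑ j, p j = 1) (x : Fin n → Fin d) :
    chiSq p (laplaceEstimator x) =
      ∑ j, ((n : ℝ) + d) * p j ^ 2 * ((count x j : ℝ) + 1)⁻¹ - 1 := by
  have hd : d ≠ 0 := by
    rintro rfl
    simp at hp1
  have hterm (j : Fin d) : p j ^ 2 / laplaceEstimator x j =
      ((n : ℝ) + d) * p j ^ 2 * ((count x j : ℝ) + 1)⁻¹ := by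
    rw [laplaceEstimator, div_div_eq_mul_div, div_eq_mul_inv, mul_comm (p j ^ 2)]
  rw [chiSq_eq_sum_sq_div fun j => (laplaceEstimator_pos x j).ne', hp1, sum_laplaceEstimator hd]
  simp only [hterm]
  ring

end ChiSq

lemma inv_natCast_add_one_eq_integral_pow (k : ℕ) :
    ((k : ℝ) + 1)⁻¹ = ∫ t in (0 : ℝ)..1, t ^ k := by
  simp [integral_pow]

lemma mul_integral_one_sub_add_mul_pow (c : ℝ) (n : ℕ) :
    c * ∫ t in (0 : ℝ)..1, (1 - c + c * t) ^ n = (1 - (1 - c) ^ (n + 1)) / ((n : ℝ) + 1) := by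
  calc c * ∫ t in (0 : ℝ)..1, (1 - c + c * t) ^ n
      = ∫ u in (1 - c + c * 0)..(1 - c + c * 1), u ^ n :=
        intervalIntegral.mul_integral_comp_add_mul (f := fun u => u ^ n) c (1 - c)
    _ = (1 - (1 - c) ^ (n + 1)) / ((n : ℝ) + 1) := by simp [integral_pow]

section SampleExp

variable {n d : ℕ} (p : Fin d → ℝ)

lemma sampleExp_sub (f g : (Fin n → Fin d) → ℝ) :
    sampleExp p (fun x => f x - g x) = sampleExp p f - sampleExp p g := by
  simp only [sampleExp, mul_sub, sum_sub_distrib]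

lemma sampleExp_const_mul (c : ℝ) (f : (Fin n → Fin d) → ℝ) :
    sampleExp p (fun x => c * f x) = c * sampleExp p f := by
  simp only [sampleExp, mul_sum, mul_left_comm]

lemma sampleExp_sum {ι : Type*} (s : Finset ι) (f : ι → (Fin n → Fin d) → ℝ) :
    sampleExp p (fun x => ∑ k ∈ s, f k x) = ∑ k ∈ s, sampleExp p (f k) := by
  simp only [sampleExp, mul_sum]
  exact sum_comm

lemma sampleExp_integral {a b : ℝ} {F : (Fin n → Fin d) → ℝ → ℝ}
    (hF : ∀ x, IntervalIntegrable (F x) MeasureTheory.volume a b) :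
    sampleExp p (fun x => ∫ t in a..b, F x t) = ∫ t in a..b, sampleExp p (fun x => F x t) := by
  simp only [sampleExp]
  rw [intervalIntegral.integral_finsetSum fun x _ => (hF x).const_mul _]
  simp only [intervalIntegral.integral_const_mul]

lemma sampleExp_prod (g : Fin d → ℝ) :
    sampleExp p (fun x : Fin n → Fin d => ∏ i, g (x i)) = (∑ j, p j * g j) ^ n := by
  simp only [sampleExp, ← prod_mul_distrib]
  exact (Fintype.sum_pow (fun j => p j * g j) n).symm

variable {p}

lemma sampleExp_const (hp1 : ∑ j, p j = 1) (c : ℝ) :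
    sampleExp p (fun _ : Fin n → Fin d => c) = c := by
  rw [sampleExp, ← sum_mul, ← Fintype.sum_pow, hp1, one_pow, one_mul]

lemma sampleExp_pow_count (hp1 : ∑ j, p j = 1) (j : Fin d) (t : ℝ) :
    sampleExp p (fun x : Fin n → Fin d => t ^ count x j) = (1 - p j + p j * t) ^ n := by
  have hmean : ∑ k, p k * (if k = j then t else 1) = 1 - p j + p j * t := by
    have hsplit (k : Fin d) :
        p k * (if k = j then t else 1) = p k + if k = j then p k * (t - 1) else 0 := by
      split_ifs <;> ring
    simp only [hsplit, sum_add_distrib, hp1, sum_ite_eq', mem_univ, if_true]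
    ring
  simp only [pow_count]
  rw [sampleExp_prod p fun k => if k = j then t else 1, hmean]

lemma mul_sampleExp_inv_count_add_one (hp1 : ∑ j, p j = 1) (j : Fin d) :
    p j * sampleExp p (fun x : Fin n → Fin d => ((count x j : ℝ) + 1)⁻¹) =
      (1 - (1 - p j) ^ (n + 1)) / ((n : ℝ) + 1) := by
  simp only [inv_natCast_add_one_eq_integral_pow]
  rw [sampleExp_integral p fun x => (continuous_pow (count x j)).intervalIntegrable 0 1]
  simp only [sampleExp_pow_count hp1]
  exact mul_integral_one_sub_add_mul_pow (p j) n

theorem sampleExp_chiSq_laplaceEstimator (hp1 : ∑ j, p j = 1) :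
    sampleExp p (fun x : Fin n → Fin d => chiSq p (laplaceEstimator x)) =
      ((d : ℝ) - 1) / ((n : ℝ) + 1)
        - (((n : ℝ) + d) / ((n : ℝ) + 1)) * ∑ j, p j * (1 - p j) ^ (n + 1) := by
  have hterm (j : Fin d) :
      sampleExp p (fun x : Fin n → Fin d =>
        ((n : ℝ) + d) * p j ^ 2 * ((count x j : ℝ) + 1)⁻¹) =
      ((n : ℝ) + d) / ((n : ℝ) + 1) * (p j - p j * (1 - p j) ^ (n + 1)) := by
    rw [sampleExp_const_mul, sq, ← mul_assoc, mul_assoc, mul_sampleExp_inv_count_add_one hp1]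
    ring
  simp only [chiSq_laplaceEstimator hp1]
  rw [sampleExp_sub, sampleExp_const hp1, sampleExp_sum]
  simp only [hterm]
  rw [← mul_sum, sum_sub_distrib, hp1]
  field_simp
  ring

end SampleExp

lemma sum_mul_one_sub_pow_nonneg {ι : Type*} {s : Finset ι} {p : ι → ℝ}
    (hp : ∀ i ∈ s, p i ∈ Set.Icc 0 1) (m : ℕ) : 0 ≤ ∑ i ∈ s, p i * (1 - p i) ^ m :=
  sum_nonneg fun i hi => mul_nonneg (hp i hi).1 (pow_nonneg (sub_nonneg.mpr (hp i hi).2) m)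

theorem laplace_expected_chiSq (n d : ℕ) (hn : 1 ≤ n) (hd : 1 ≤ d)
    (p : Fin d → ℝ) (hp0 : ∀ j, 0 ≤ p j) (hp1 : ∑ j, p j = 1) :
    sampleExp p (fun x : Fin n → Fin d =>
        chiSq p (fun j => ((count x j : ℝ) + 1) / ((n : ℝ) + d))) =
      ((d : ℝ) - 1) / ((n : ℝ) + 1)
        - (((n : ℝ) + d) / ((n : ℝ) + 1)) * ∑ j, p j * (1 - p j) ^ (n + 1) ∧
    sampleExp p (fun x : Fin n → Fin d =>
        chiSq p (fun j => ((count x j : ℝ) + 1) / ((n : ℝ) + d))) ≤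
      ((d : ℝ) - 1) / ((n : ℝ) + 1) ∧
    ((d : ℝ) - 1) / ((n : ℝ) + 1) ≤ (d : ℝ) / n := by
  have hidentity := sampleExp_chiSq_laplaceEstimator (n := n) hp1
  have hp_mem : ∀ j ∈ univ, p j ∈ Set.Icc 0 1 := fun j hj =>
    ⟨hp0 j, hp1 ▸ single_le_sum (fun k _ => hp0 k) hj⟩
  have hn_pos : (0 : ℝ) < n := by exact_mod_cast hn
  refine ⟨hidentity, hidentity.trans_le (sub_le_self _ ?_), ?_⟩
  · exact mul_nonneg (by positivity) (sum_mul_one_sub_pow_nonneg hp_mem _)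
  · exact div_le_div₀ (by positivity) (by linarith) hn_pos (by linarith)
end
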